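/- Let f = a·z_1³ + b·z_2³ + c·z_3³ + 6d·z_1z_2z_3 ∈ ℂ[z_1,z_2,z_3] with Δ(f) ≠ 0, let μ_I be scalars with z^I − μ_I·H(f) ∈ J(f) for |I| = 3, and let A_f be the associated cubic. Define the Pippian P(f) := −d·(bc·z_1³ + ac·z_2³ + ab·z_3³) − (abc − 4d³)·z_1z_2z_3 and the Quippian Q(f) := (abc − 10d³)·(bc·z_1³ + ac·z_2³ + ab·z_3³) − 6d²·(5abc + 4d³)·z_1z_2z_3. Then the polynomial identity Δ(f)·A_f = −(1/36)·I6(f)·P(f) − (1/27)·I4(f)·Q(f) holds in ℂ[z_1,z_2,z_3]. -/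

import Mathlib

/-!
Write `t = a b c` and `e = t + 8 d³`. When `Δ(f) ≠ 0`, the degree-three part of `P3 / J(f)` is
one-dimensional, and the class of a cubic form is detected by the linear functional `socle` on
`P3` with `z_1³ ↦ -2d·bc`, `z_2³ ↦ -2d·ac`, `z_3³ ↦ -2d·ab`, `z_1z_2z_3 ↦ t`, and every
other monomial sent to `0`. It vanishes on `J(f)` (`socle_jac`), and on the Hessian it equals `216·t·e`
(`socle_hess`). Applying it to the membership hypothesis gives `216·t·e·μ_I = socle (z^I)`.
Since `Δ(f) = t·e³`, this determines `216·Δ(f)·μ_I = e²·socle (z^I)`, and comparing coefficients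
of monomials reduces the theorem to two polynomial identities in `a, b, c, d`.
-/

open MvPolynomial

noncomputable section

/-- Ternary forms: polynomials in three variables over ℂ. -/
abbrev P3 := MvPolynomial (Fin 3) ℂ

/-- The Hessian determinant of a ternary form. -/
def hess3 (f : P3) : P3 := (Matrix.of fun i j => pderiv i (pderiv j f)).det

/-- The Jacobian ideal `J(f) = (f_1, f_2, f_3)`. -/
def jac3 (f : P3) : Ideal P3 := Ideal.span {pderiv 0 f, pderiv 1 f, pderiv 2 f}

/-- The ternary cubic `a·z_1³ + b·z_2³ + c·z_3³ + 6d·z_1z_2z_3`. -/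
def cubic (a b c d : ℂ) : P3 :=
  MvPolynomial.C a * X 0 ^ 3 + MvPolynomial.C b * X 1 ^ 3 + MvPolynomial.C c * X 2 ^ 3 +
    MvPolynomial.C (6 * d) * X 0 * X 1 * X 2

/-- Coefficient `a` of `z_1³` in a cubic of the above form. -/
def ca (f : P3) : ℂ := coeff (Finsupp.single 0 3) f
/-- Coefficient `b` of `z_2³`. -/
def cb (f : P3) : ℂ := coeff (Finsupp.single 1 3) f
/-- Coefficient `c` of `z_3³`. -/
def cc (f : P3) : ℂ := coeff (Finsupp.single 2 3) f
/-- Coefficient `d`, i.e. one sixth of the coefficient of `z_1z_2z_3`. -/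
def cd (f : P3) : ℂ :=
  coeff (Finsupp.single 0 1 + Finsupp.single 1 1 + Finsupp.single 2 1) f / 6

/-- The Aronhold invariant `I4(f) = abcd − d⁴` of `a·z_1³ + b·z_2³ + c·z_3³ + 6d·z_1z_2z_3`. -/
def I4 (f : P3) : ℂ := ca f * cb f * cc f * cd f - cd f ^ 4

/-- The Aronhold invariant `I6(f) = a²b²c² − 20abcd³ − 8d⁶`. -/
def I6 (f : P3) : ℂ :=
  ca f ^ 2 * cb f ^ 2 * cc f ^ 2 - 20 * ca f * cb f * cc f * cd f ^ 3 - 8 * cd f ^ 6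

/-- The discriminant `Δ(f) = I6(f)² + 64·I4(f)³`. -/
def disc3 (f : P3) : ℂ := I6 f ^ 2 + 64 * I4 f ^ 3

/-- The associated cubic `A_f := Σ_{|I|=3} (6/(i_1!i_2!i_3!))·μ_I·z^I`
built from scalars `μ_I`. -/
def assocCubic (μ : (Fin 3 → ℕ) → ℂ) : P3 :=
  ∑ I ∈ Finset.Nat.antidiagonalTuple 3 3,
    MvPolynomial.C ((6 : ℂ) / ∏ i, ((I i).factorial : ℂ)) * MvPolynomial.C (μ I) *
      ∏ i, X i ^ I i

/-- The Pippian contravariant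
`P(f) = −d(bc·z_1³ + ac·z_2³ + ab·z_3³) − (abc − 4d³)·z_1z_2z_3`. -/
def pippian (a b c d : ℂ) : P3 :=
  MvPolynomial.C (-d) *
      (MvPolynomial.C (b * c) * X 0 ^ 3 + MvPolynomial.C (a * c) * X 1 ^ 3 +
        MvPolynomial.C (a * b) * X 2 ^ 3) -
    MvPolynomial.C (a * b * c - 4 * d ^ 3) * X 0 * X 1 * X 2

/-- The Quippian contravariant
`Q(f) = (abc − 10d³)(bc·z_1³ + ac·z_2³ + ab·z_3³) − 6d²(5abc + 4d³)·z_1z_2z_3`. -/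
def quippian (a b c d : ℂ) : P3 :=
  MvPolynomial.C (a * b * c - 10 * d ^ 3) *
      (MvPolynomial.C (b * c) * X 0 ^ 3 + MvPolynomial.C (a * c) * X 1 ^ 3 +
        MvPolynomial.C (a * b) * X 2 ^ 3) -
    MvPolynomial.C (6 * d ^ 2 * (5 * a * b * c + 4 * d ^ 3)) * X 0 * X 1 * X 2

/-- The exponent of the monomial `z_1^i z_2^j z_3^k`. -/
def mon (i j k : ℕ) : Fin 3 →₀ ℕ := Finsupp.single 0 i + Finsupp.single 1 j + Finsupp.single 2 k

lemma mon_apply (i j k : ℕ) (n : Fin 3) : mon i j k n = ![i, j, k] n := by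
  fin_cases n <;> simp [mon]

lemma coeff_mon_X0 (i j k : ℕ) (p : P3) :
    coeff (mon (i + 1) j k) (p * X 0) = coeff (mon i j k) p := by
  have h : mon (i + 1) j k = mon i j k + Finsupp.single 0 1 := by
    ext n; fin_cases n <;> simp [mon]
  rw [h, coeff_mul_X]

lemma coeff_mon_X1 (i j k : ℕ) (p : P3) :
    coeff (mon i (j + 1) k) (p * X 1) = coeff (mon i j k) p := by
  have h : mon i (j + 1) k = mon i j k + Finsupp.single 1 1 := by
    ext n; fin_cases n <;> simp [mon]
  rw [h, coeff_mul_X]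

lemma coeff_mon_X2 (i j k : ℕ) (p : P3) :
    coeff (mon i j (k + 1)) (p * X 2) = coeff (mon i j k) p := by
  have h : mon i j (k + 1) = mon i j k + Finsupp.single 2 1 := by
    ext n; fin_cases n <;> simp [mon]
  rw [h, coeff_mul_X]

lemma coeff_mon_X0_zero (j k : ℕ) (p : P3) : coeff (mon 0 j k) (p * X 0) = 0 := by
  simp [coeff_mul_X', mon_apply]

lemma coeff_mon_X1_zero (i k : ℕ) (p : P3) : coeff (mon i 0 k) (p * X 1) = 0 := by
  simp [coeff_mul_X', mon_apply]

lemma coeff_mon_X2_zero (i j : ℕ) (p : P3) : coeff (mon i j 0) (p * X 2) = 0 := by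
  simp [coeff_mul_X', mon_apply]

lemma coeff_mon_C (r : ℂ) : coeff (mon 0 0 0) (C r : P3) = r := by
  simp [mon]

/-- The linear functional on cubic forms, extended by zero to all other degrees, that is
killed by `jac3 (cubic a b c d)`. It is scaled by `a b c` so as to have polynomial coefficients
(the natural values on the cubes are `-2d/a`, `-2d/b`, `-2d/c`, with value `1` on `z_1z_2z_3`). -/
def socle (a b c d : ℂ) : P3 →ₗ[ℂ] ℂ :=
  (-2 * d * (b * c)) • lcoeff ℂ (mon 3 0 0) + (-2 * d * (a * c)) • lcoeff ℂ (mon 0 3 0) +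
    (-2 * d * (a * b)) • lcoeff ℂ (mon 0 0 3) + (a * b * c) • lcoeff ℂ (mon 1 1 1)

lemma socle_apply (a b c d : ℂ) (p : P3) :
    socle a b c d p = -2 * d * (b * c) * coeff (mon 3 0 0) p
      + -2 * d * (a * c) * coeff (mon 0 3 0) p + -2 * d * (a * b) * coeff (mon 0 0 3) p
      + a * b * c * coeff (mon 1 1 1) p := by
  simp [socle]

lemma C_two : (C 2 : P3) = 2 := map_ofNat C 2

lemma C_three : (C 3 : P3) = 3 := map_ofNat C 3

lemma C_six : (C 6 : P3) = 6 := map_ofNat C 6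

lemma C_two_hundred_sixteen : (C 216 : P3) = 216 := map_ofNat C 216

lemma pderiv_cubic_zero (a b c d : ℂ) :
    pderiv 0 (cubic a b c d) = C (3 * a) * X 0 * X 0 + C (6 * d) * X 1 * X 2 := by
  simp [cubic, pderiv_X]
  simp only [C_three]
  ring

lemma pderiv_cubic_one (a b c d : ℂ) :
    pderiv 1 (cubic a b c d) = C (3 * b) * X 1 * X 1 + C (6 * d) * X 0 * X 2 := by
  simp [cubic, pderiv_X]
  simp only [C_three]
  ring

lemma pderiv_cubic_two (a b c d : ℂ) :
    pderiv 2 (cubic a b c d) = C (3 * c) * X 2 * X 2 + C (6 * d) * X 0 * X 1 := by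
  simp [cubic, pderiv_X]
  simp only [C_three]
  ring

/-- Only the linear part of the cofactors matters here: all nine products of a variable with a
partial derivative of the cubic are sent to zero. -/
lemma socle_jac (a b c d : ℂ) (g : P3) (hg : g ∈ jac3 (cubic a b c d)) :
    socle a b c d g = 0 := by
  rw [jac3, pderiv_cubic_zero, pderiv_cubic_one, pderiv_cubic_two] at hg
  obtain ⟨u, v, w, rfl⟩ := Submodule.mem_span_triple.1 hg
  -- Move constants to the front, leaving products that end in variables for the coefficient lemmas.
  simp only [smul_eq_mul, mul_add, ← mul_assoc, mul_comm _ (C _ : P3)]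
  simp only [mul_assoc (C _ : P3)]
  rw [socle_apply]
  simp only [coeff_add, coeff_C_mul]
  simp only [coeff_mon_X0 2, coeff_mon_X0 1, coeff_mon_X0 0, coeff_mon_X1 _ 2, coeff_mon_X1 _ 1,
    coeff_mon_X1 _ 0, coeff_mon_X2 _ _ 2, coeff_mon_X2 _ _ 1, coeff_mon_X2 _ _ 0,
    coeff_mon_X0_zero, coeff_mon_X1_zero, coeff_mon_X2_zero]
  ring

lemma hess_cubic (a b c d : ℂ) :
    hess3 (cubic a b c d) = C (216 * (a * b * c + 2 * d ^ 3)) * X 0 * X 1 * X 2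
      + C (-216 * a * d ^ 2) * X 0 * X 0 * X 0 + C (-216 * b * d ^ 2) * X 1 * X 1 * X 1
      + C (-216 * c * d ^ 2) * X 2 * X 2 * X 2 := by
  simp [hess3, Matrix.det_fin_three, pderiv_cubic_zero, pderiv_cubic_one, pderiv_cubic_two,
    pderiv_X]
  simp only [C_two, C_three, C_six, C_two_hundred_sixteen]
  ring

lemma socle_hess (a b c d : ℂ) :
    socle a b c d (hess3 (cubic a b c d)) = 216 * (a * b * c) * (a * b * c + 8 * d ^ 3) := by
  rw [hess_cubic, socle_apply]
  simp only [coeff_add, coeff_mon_X0_zero, coeff_mon_X1_zero, coeff_mon_X2_zero, coeff_mon_X0,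
    coeff_mon_X1, coeff_mon_X2, coeff_mon_C]
  ring

lemma cubic_eq (a b c d : ℂ) :
    cubic a b c d = C a * X 0 * X 0 * X 0 + C b * X 1 * X 1 * X 1 + C c * X 2 * X 2 * X 2
      + C (6 * d) * X 0 * X 1 * X 2 := by
  rw [cubic]; ring

lemma ca_cubic (a b c d : ℂ) : ca (cubic a b c d) = a := by
  have h : (Finsupp.single 0 3 : Fin 3 →₀ ℕ) = mon 3 0 0 := by simp [mon]
  rw [ca, h, cubic_eq]
  simp only [coeff_add, coeff_mon_X0_zero, coeff_mon_X1_zero, coeff_mon_X2_zero, coeff_mon_X0,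
    coeff_mon_X1, coeff_mon_X2, coeff_mon_C, add_zero]

lemma cb_cubic (a b c d : ℂ) : cb (cubic a b c d) = b := by
  have h : (Finsupp.single 1 3 : Fin 3 →₀ ℕ) = mon 0 3 0 := by simp [mon]
  rw [cb, h, cubic_eq]
  simp only [coeff_add, coeff_mon_X0_zero, coeff_mon_X1_zero, coeff_mon_X2_zero, coeff_mon_X0,
    coeff_mon_X1, coeff_mon_X2, coeff_mon_C, add_zero, zero_add]

lemma cc_cubic (a b c d : ℂ) : cc (cubic a b c d) = c := by
  have h : (Finsupp.single 2 3 : Fin 3 →₀ ℕ) = mon 0 0 3 := by simp [mon]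
  rw [cc, h, cubic_eq]
  simp only [coeff_add, coeff_mon_X0_zero, coeff_mon_X1_zero, coeff_mon_X2_zero, coeff_mon_X0,
    coeff_mon_X1, coeff_mon_X2, coeff_mon_C, add_zero, zero_add]

lemma cd_cubic (a b c d : ℂ) : cd (cubic a b c d) = d := by
  rw [cd, ← mon, cubic_eq]
  simp only [coeff_add, coeff_mon_X0_zero, coeff_mon_X1_zero, coeff_mon_X2_zero, coeff_mon_X0 0,
    coeff_mon_X1 _ 0, coeff_mon_X2 _ _ 0, coeff_mon_C, zero_add]
  ring

lemma disc_cubic (a b c d : ℂ) :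
    disc3 (cubic a b c d) = a * b * c * (a * b * c + 8 * d ^ 3) ^ 3 := by
  simp only [disc3, I6, I4, ca_cubic, cb_cubic, cc_cubic, cd_cubic]
  ring

lemma sum_antidiagonalTuple_three_three {M : Type*} [AddCommMonoid M] (F : (Fin 3 → ℕ) → M) :
    ∑ I ∈ Finset.Nat.antidiagonalTuple 3 3, F I =
      F ![0, 0, 3] + F ![0, 1, 2] + F ![0, 2, 1] + F ![0, 3, 0] + F ![1, 0, 2] + F ![1, 1, 1]
        + F ![1, 2, 0] + F ![2, 0, 1] + F ![2, 1, 0] + F ![3, 0, 0] := by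
  have h : Finset.Nat.antidiagonalTuple 3 3 = {![0, 0, 3], ![0, 1, 2], ![0, 2, 1], ![0, 3, 0],
      ![1, 0, 2], ![1, 1, 1], ![1, 2, 0], ![2, 0, 1], ![2, 1, 0], ![3, 0, 0]} := by
    decide
  rw [h]
  repeat rw [Finset.sum_insert (by decide)]
  rw [Finset.sum_singleton]
  simp only [add_assoc]

/-- The functional `socle` determines every `μ_I`; no division is needed, as the factor `t·e³`
is the discriminant. -/
lemma mu_eq (a b c d : ℂ) (μ : (Fin 3 → ℕ) → ℂ)
    (hμ : ∀ I : Fin 3 → ℕ, (∑ i, I i) = 3 →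
      (∏ i, X i ^ I i) - C (μ I) * hess3 (cubic a b c d) ∈ jac3 (cubic a b c d))
    (i j k : ℕ) (h : i + j + k = 3) :
    216 * disc3 (cubic a b c d) * μ ![i, j, k] = (a * b * c + 8 * d ^ 3) ^ 2 *
      socle a b c d (C 1 * X 0 ^ i * X 1 ^ j * X 2 ^ k) := by
  have h1 := socle_jac a b c d _ (hμ ![i, j, k] (by simpa [Fin.sum_univ_three] using h))
  rw [map_sub, C_mul', map_smul, socle_hess, smul_eq_mul] at h1
  simp only [Fin.prod_univ_three, Matrix.cons_val] at h1
  rw [C_1, one_mul, disc_cubic]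
  linear_combination -(a * b * c + 8 * d ^ 3) ^ 2 * h1

/-- the contravariant identity for ternary cubics:
`Δ(f)·A_f = −(1/36)·I6(f)·P(f) − (1/27)·I4(f)·Q(f)`. -/
theorem contravariant_identity_cubic (a b c d : ℂ) (f : P3)
    (hf : f = cubic a b c d) (hΔ : disc3 f ≠ 0)
    (μ : (Fin 3 → ℕ) → ℂ)
    (hμ : ∀ I : Fin 3 → ℕ, (∑ i, I i) = 3 →
      (∏ i, X i ^ I i) - MvPolynomial.C (μ I) * hess3 f ∈ jac3 f) :
    MvPolynomial.C (disc3 f) * assocCubic μ =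
      MvPolynomial.C (-(1 / 36) * I6 f) * pippian a b c d -
        MvPolynomial.C (1 / 27 * I4 f) * quippian a b c d := by
  subst hf
  -- The equation for each of the ten multi-indices, with the value of `socle` computed.
  have key := mu_eq a b c d μ hμ
  have h003 := key 0 0 3 rfl
  have h012 := key 0 1 2 rfl
  have h021 := key 0 2 1 rfl
  have h030 := key 0 3 0 rfl
  have h102 := key 1 0 2 rfl
  have h111 := key 1 1 1 rfl
  have h120 := key 1 2 0 rfl
  have h201 := key 2 0 1 rfl
  have h210 := key 2 1 0 rfl
  have h300 := key 3 0 0 rfl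
  simp only [socle_apply, pow_succ, pow_zero, one_mul, ← mul_assoc, mul_one, coeff_mon_X0_zero,
    coeff_mon_X1_zero, coeff_mon_X2_zero, coeff_mon_X0, coeff_mon_X1, coeff_mon_X2, coeff_mon_C,
    mul_zero, add_zero, zero_add] at h003 h012 h021 h030 h102 h111 h120 h201 h210 h300
  have hI4 : I4 (cubic a b c d) = a * b * c * d - d ^ 4 := by
    simp only [I4, ca_cubic, cb_cubic, cc_cubic, cd_cubic]
  have hI6 : I6 (cubic a b c d) =
      a ^ 2 * b ^ 2 * c ^ 2 - 20 * a * b * c * d ^ 3 - 8 * d ^ 6 := by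
    simp only [I6, ca_cubic, cb_cubic, cc_cubic, cd_cubic]
  generalize disc3 (cubic a b c d) = D at *
  generalize I4 (cubic a b c d) = i4 at *
  generalize I6 (cubic a b c d) = i6 at *
  -- The identity coefficient by coefficient, first in `ℂ` and then lifted to constant polynomials.
  have e300 : D * μ ![3, 0, 0] =
      -(1 / 36) * i6 * (-d * (b * c)) - 1 / 27 * i4 * ((a * b * c - 10 * d ^ 3) * (b * c)) := by
    rw [hI4, hI6]
    linear_combination h300 / 216
  have e030 : D * μ ![0, 3, 0] =
      -(1 / 36) * i6 * (-d * (a * c)) - 1 / 27 * i4 * ((a * b * c - 10 * d ^ 3) * (a * c)) := by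
    rw [hI4, hI6]
    linear_combination h030 / 216
  have e003 : D * μ ![0, 0, 3] =
      -(1 / 36) * i6 * (-d * (a * b)) - 1 / 27 * i4 * ((a * b * c - 10 * d ^ 3) * (a * b)) := by
    rw [hI4, hI6]
    linear_combination h003 / 216
  have e111 : 6 * (D * μ ![1, 1, 1]) = -(1 / 36) * i6 * -(a * b * c - 4 * d ^ 3) -
      1 / 27 * i4 * -(6 * d ^ 2 * (5 * a * b * c + 4 * d ^ 3)) := by
    rw [hI4, hI6]
    linear_combination h111 / 36
  have e012 : D * μ ![0, 1, 2] = 0 := by linear_combination h012 / 216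
  have e021 : D * μ ![0, 2, 1] = 0 := by linear_combination h021 / 216
  have e102 : D * μ ![1, 0, 2] = 0 := by linear_combination h102 / 216
  have e120 : D * μ ![1, 2, 0] = 0 := by linear_combination h120 / 216
  have e201 : D * μ ![2, 0, 1] = 0 := by linear_combination h201 / 216
  have e210 : D * μ ![2, 1, 0] = 0 := by linear_combination h210 / 216
  rw [assocCubic, sum_antidiagonalTuple_three_three]
  replace e003 := congrArg (C : ℂ → P3) e003
  replace e012 := congrArg (C : ℂ → P3) e012
  replace e021 := congrArg (C : ℂ → P3) e021
  replace e030 := congrArg (C : ℂ → P3) e030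
  replace e102 := congrArg (C : ℂ → P3) e102
  replace e111 := congrArg (C : ℂ → P3) e111
  replace e120 := congrArg (C : ℂ → P3) e120
  replace e201 := congrArg (C : ℂ → P3) e201
  replace e210 := congrArg (C : ℂ → P3) e210
  replace e300 := congrArg (C : ℂ → P3) e300
  simp only [Fin.prod_univ_three, Matrix.cons_val, Nat.factorial, pippian, quippian]
  norm_num only [C_0, C_1]
  simp only [C_mul, C_add, C_sub, C_neg, C_pow, C_0,
    C_three] at e003 e012 e021 e030 e102 e111 e120 e201 e210 e300 ⊢
  linear_combination e003 * X 2 ^ 3 + 3 * e012 * X 1 ^ 1 * X 2 ^ 2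
    + 3 * e021 * X 1 ^ 2 * X 2 ^ 1 + e030 * X 1 ^ 3
    + 3 * e102 * X 0 ^ 1 * X 2 ^ 2 + e111 * X 0 ^ 1 * X 1 ^ 1 * X 2 ^ 1 + 3 * e120 * X 0 ^ 1 * X 1 ^ 2
    + 3 * e201 * X 0 ^ 2 * X 2 ^ 1 + 3 * e210 * X 0 ^ 2 * X 1 ^ 1 + e300 * X 0 ^ 3

end
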